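/- arXiv:2401.13232 — 3 statements merged into one kernel-verified Lean document; each statement's English description precedes it below -/
import Mathlib

section
/- Let (U, V) = {(U_n, V_n)}_{n=1}^∞ be a pair of general sources with joint distributions μ_{U_nV_n}. If there exists a sequence {ψ_n}_{n=1}^∞ of (deterministic) functions ψ_n : 𝒱_n → 𝒰_n such that lim_{n→∞} P(ψ_n(V_n) ≠ U_n) = 0, then H̄(U | V) = 0. -/
/-!
The normalized conditional information density is nonnegative, so every threshold `θ < 0` is
exceeded with probability one and does not belong to the set defining the limsup in probability.
For `θ > 0`, the event that the density exceeds `θ` is split according to whether `ψ n` decodes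
correctly. Each `v` has a single correctly decoded `u = ψ n v`, and on the event such a pair has
mass at most `2 ^ (-nθ) * P(v)`; summing over `v` gives
`P(density > θ) ≤ P(ψ n (V n) ≠ U n) + 2 ^ (-nθ)` (`prob_density_le`), which tends to `0`.
Hence the set contains all positive reals and no negative ones, and its infimum is `0`.
-/

open Filter

/-- Probability of an event under a probability mass function on a finite type. -/
noncomputable def prob {Ω : Type*} [Fintype Ω] (μ : Ω → ℝ) (E : Set Ω) : ℝ :=
  ∑ ω, E.indicator μ ω

/-- `μ` is a probability mass function on the finite type `Ω`. -/
def IsPMF {Ω : Type*} [Fintype Ω] (μ : Ω → ℝ) : Prop :=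
  (∀ ω, 0 ≤ μ ω) ∧ ∑ ω, μ ω = 1

/-- Limit superior in probability of a sequence of random variables `V n`,
where the distribution of the underlying random element of `Ω n` is `μ n`. -/
noncomputable def pLimsup {Ω : ℕ → Type*} [∀ n, Fintype (Ω n)]
    (μ : ∀ n, Ω n → ℝ) (V : ∀ n, Ω n → ℝ) : ℝ :=
  sInf {θ : ℝ | Tendsto (fun n => prob (μ n) {ω | θ < V n ω}) atTop (nhds 0)}

/-- Limit inferior in probability. -/
noncomputable def pLiminf {Ω : ℕ → Type*} [∀ n, Fintype (Ω n)]
    (μ : ∀ n, Ω n → ℝ) (V : ∀ n, Ω n → ℝ) : ℝ :=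
  sSup {θ : ℝ | Tendsto (fun n => prob (μ n) {ω | V n ω < θ}) atTop (nhds 0)}

/-- Conditional probability `μ_{U|V}(u|v)` induced by a joint pmf on `α × β`. -/
noncomputable def condP {α β : Type*} [Fintype α] (μ : α × β → ℝ) (u : α) (v : β) : ℝ :=
  μ (u, v) / ∑ u' : α, μ (u', v)

lemma condP_nonneg {α β : Type*} [Fintype α] {μ : α × β → ℝ} (h : ∀ p, 0 ≤ μ p) (u : α) (v : β) :
    0 ≤ condP μ u v :=
  div_nonneg (h _) (Finset.sum_nonneg fun _ _ => h _)

lemma condP_le_one {α β : Type*} [Fintype α] {μ : α × β → ℝ} (h : ∀ p, 0 ≤ μ p) (u : α) (v : β) :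
    condP μ u v ≤ 1 :=
  div_le_one_of_le₀
    (Finset.single_le_sum (f := fun u' => μ (u', v)) (fun _ _ => h _) (Finset.mem_univ u))
    (Finset.sum_nonneg fun _ _ => h _)

lemma density_nonneg {α β : Type*} [Fintype α] {μ : α × β → ℝ} (h : ∀ p, 0 ≤ μ p) (n : ℕ)
    (u : α) (v : β) : 0 ≤ (n : ℝ)⁻¹ * Real.logb 2 (1 / condP μ u v) := by
  refine mul_nonneg (by positivity) ?_
  rcases (condP_nonneg h u v).eq_or_lt with h0 | h0
  · simp [← h0]
  · exact Real.logb_nonneg one_lt_two ((one_le_div h0).2 (condP_le_one h u v))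

/-- A pair whose information density exceeds a positive threshold `θ` has mass exponentially
smaller than the marginal mass of its second component. -/
lemma mass_le_of_lt_density {α β : Type*} [Fintype α] {μ : α × β → ℝ} (h : ∀ p, 0 ≤ μ p) {n : ℕ}
    {θ : ℝ} (hθ : 0 < θ) {u : α} {v : β}
    (hlt : θ < (n : ℝ)⁻¹ * Real.logb 2 (1 / condP μ u v)) :
    μ (u, v) ≤ ((2 : ℝ) ^ (-θ)) ^ n * ∑ u' : α, μ (u', v) := by
  -- For `n = 0` or conditional probability `0`, the junk value of the density is `0 < θ`.
  have hn : 0 < (n : ℝ) := by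
    rcases n.eq_zero_or_pos with rfl | hn
    · simp at hlt; linarith
    · exact_mod_cast hn
  rcases (condP_nonneg h u v).eq_or_lt with h0 | h0
  · simp [← h0] at hlt; linarith
  have hm : 0 < ∑ u' : α, μ (u', v) := by
    refine (Finset.sum_nonneg fun _ _ => h _).lt_of_ne' fun hs => ?_
    simp [condP, hs] at h0
  rw [← div_le_iff₀ hm]
  change condP μ u v ≤ _
  rw [one_div, Real.logb_inv] at hlt
  have h1 : Real.logb 2 (condP μ u v) ≤ -θ * n := by
    rw [inv_mul_eq_div, lt_div_iff₀ hn] at hlt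
    linarith
  rw [← Real.rpow_mul_natCast (by norm_num)]
  exact (Real.logb_le_iff_le_rpow one_lt_two h0).1 h1

lemma prob_density_le {α β : Type*} [Fintype α] [Fintype β] {μ : α × β → ℝ} (hμ : IsPMF μ)
    (ψ : β → α) (n : ℕ) {θ : ℝ} (hθ : 0 < θ) :
    prob μ {p | θ < (n : ℝ)⁻¹ * Real.logb 2 (1 / condP μ p.1 p.2)} ≤
      prob μ {p | ψ p.2 ≠ p.1} + ((2 : ℝ) ^ (-θ)) ^ n := by
  classical
  set t : ℝ := ((2 : ℝ) ^ (-θ)) ^ n with ht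
  have ht0 : 0 ≤ t := by positivity
  have hsum : ∑ p : α × β, (if ψ p.2 = p.1 then t * ∑ u' : α, μ (u', p.2) else 0) = t := by
    rw [Fintype.sum_prod_type_right]
    simp only [Finset.sum_ite_eq, Finset.mem_univ, if_true]
    rw [← Finset.mul_sum, ← Fintype.sum_prod_type_right, hμ.2, mul_one]
  unfold prob
  rw [← hsum, ← Finset.sum_add_distrib]
  refine Finset.sum_le_sum fun p _ => ?_
  have hm : 0 ≤ t * ∑ u' : α, μ (u', p.2) :=
    mul_nonneg ht0 (Finset.sum_nonneg fun _ _ => hμ.1 _)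
  by_cases hA : θ < (n : ℝ)⁻¹ * Real.logb 2 (1 / condP μ p.1 p.2)
  · have := mass_le_of_lt_density hμ.1 hθ hA
    by_cases hB : ψ p.2 = p.1
    · simp only [Set.indicator, Set.mem_ofPred_eq, hA, hB, ne_eq, not_true, if_true, if_false]
      rw [zero_add]
      exact this
    · simp [Set.indicator, hB]
      split_ifs
      exacts [le_rfl, hμ.1 p]
  · have := hμ.1 p
    simp only [Set.indicator, Set.mem_ofPred_eq, hA, if_false]
    split_ifs <;> linarith

/-- Fano-type lemma: if there are deterministic functions `ψ n` with
`P(ψ n (V n) ≠ U n) → 0`, then the spectral conditional sup-entropy rate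
`H̄(U|V)` is zero.  Here the joint source on `α n × β n` has distribution `μ n`
with components `(U_n, V_n)`. -/
theorem supEntropy_eq_zero_of_decodable {α β : ℕ → Type*}
    [∀ n, Fintype (α n)] [∀ n, Fintype (β n)]
    (μ : ∀ n, α n × β n → ℝ) (hμ : ∀ n, IsPMF (μ n))
    (ψ : ∀ n, β n → α n)
    (hψ : Tendsto (fun n => prob (μ n) {p | ψ n p.2 ≠ p.1}) atTop (nhds 0)) :
    pLimsup μ (fun n p => (n : ℝ)⁻¹ * Real.logb 2 (1 / condP (μ n) p.1 p.2)) = 0 := by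
  unfold pLimsup
  set S : Set ℝ := {θ : ℝ | Tendsto (fun n => prob (μ n)
    {p | θ < (n : ℝ)⁻¹ * Real.logb 2 (1 / condP (μ n) p.1 p.2)}) atTop (nhds 0)} with hS
  have hpos : ∀ θ : ℝ, 0 < θ → θ ∈ S := by
    intro θ hθ
    have hgeom : Tendsto (fun n : ℕ => ((2 : ℝ) ^ (-θ)) ^ n) atTop (nhds 0) :=
      tendsto_pow_atTop_nhds_zero_of_lt_one (by positivity)
        (Real.rpow_lt_one_of_one_lt_of_neg one_lt_two (by linarith))
    refine squeeze_zero (fun n => ?_) (fun n => prob_density_le (hμ n) (ψ n) n hθ)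
      (by simpa using hψ.add hgeom)
    exact Finset.sum_nonneg fun p _ => Set.indicator_nonneg (fun q _ => (hμ n).1 q) p
  have hnonneg : ∀ θ ∈ S, 0 ≤ θ := by
    intro θ hθ
    by_contra! hneg
    have hone : ∀ n, prob (μ n)
        {p | θ < (n : ℝ)⁻¹ * Real.logb 2 (1 / condP (μ n) p.1 p.2)} = 1 := by
      intro n
      have : {p : α n × β n | θ < (n : ℝ)⁻¹ * Real.logb 2 (1 / condP (μ n) p.1 p.2)}
          = Set.univ :=
        Set.eq_univ_of_forall fun p => hneg.trans_le (density_nonneg (hμ n).1 n p.1 p.2)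
      rw [this, prob, Set.indicator_univ, (hμ n).2]
    simp only [hS, Set.mem_ofPred_eq, hone] at hθ
    exact one_ne_zero (tendsto_nhds_unique tendsto_const_nhds hθ)
  refine le_antisymm (le_of_forall_pos_le_add fun ε hε => ?_) (Real.sInf_nonneg hnonneg)
  rw [zero_add]
  exact csInf_le ⟨0, hnonneg⟩ (hpos ε hε)
end

section
/- Let (ℱ, p_F) and (𝒢, p_G) be ensembles of functions on the same finite set 𝒲, where (ℱ, p_F) satisfies the (α_F, β_F)-hash inequality and (𝒢, p_G) satisfies the (α_G, β_G)-hash inequality. Define the joint ensemble (ℱ × 𝒢, p_{(F,G)}) by (f,g)(w) := (f(w), g(w)) and p_{(F,G)}(f,g) := p_F(f) p_G(g). Then (ℱ × 𝒢, p_{(F,G)}) satisfies the (α_F α_G, β_F + β_G)-hash inequality. -/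
/-!
The functions `f` and `g` are drawn independently, so the joint collision probability of `w, w'`
is the product of the two collision probabilities (`collP_joint`), and the joint image lies in
`Im ℱ × Im 𝒢`, so `|Im (ℱ × 𝒢)| ≤ |Im ℱ| |Im 𝒢|` (`card_ImF_joint_le`). If both collision
probabilities are at most their thresholds `αF / |Im ℱ|` and `αG / |Im 𝒢|`, then these thresholds
are nonnegative and the joint collision probability is at most
`αF αG / (|Im ℱ| |Im 𝒢|) ≤ αF αG / |Im (ℱ × 𝒢)|`. So every `w'` counted in the joint sum is
counted in at least one of the two given sums; as probabilities are at most `1`, the product is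
bounded by the factor that is counted, and summing over `w'` gives `βF + βG`. This also covers
negative `αF` or `αG`: a nonnegative collision probability exceeds a negative threshold.
-/

/-- Collision probability `p_F({f : f(w) = f(w')})` of an ensemble `(ℱ, p)`. -/
noncomputable def collP {𝒲 𝒞 : Type*} (ℱ : Finset (𝒲 → 𝒞)) (p : (𝒲 → 𝒞) → ℝ)
    (w w' : 𝒲) : ℝ :=
  ∑ f ∈ ℱ, ({g : 𝒲 → 𝒞 | g w = g w'}).indicator p f

/-- The image set `Im ℱ = ∪_{f ∈ ℱ} {f(w) : w ∈ 𝒲}` of an ensemble. -/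
def ImF {𝒲 𝒞 : Type*} [Fintype 𝒲] [DecidableEq 𝒞] (ℱ : Finset (𝒲 → 𝒞)) : Finset 𝒞 :=
  ℱ.biUnion fun f => Finset.image f Finset.univ

/-- `p` is a probability distribution supported on the finite set of functions `ℱ`. -/
def IsDistOn {𝒲 𝒞 : Type*} (ℱ : Finset (𝒲 → 𝒞)) (p : (𝒲 → 𝒞) → ℝ) : Prop :=
  (∀ f, 0 ≤ p f) ∧ (∑ f ∈ ℱ, p f = 1) ∧ ∀ f ∉ ℱ, p f = 0

/-- The `(a, b)`-hash inequality: for every `w`, the sum of the collision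
probabilities `p_F({f : f(w) = f(w')})` over all `w' ≠ w` for which this collision
probability exceeds `a / |Im ℱ|` is at most `b`. -/
def HashIneq {𝒲 𝒞 : Type*} [Fintype 𝒲] [DecidableEq 𝒲] [DecidableEq 𝒞]
    (ℱ : Finset (𝒲 → 𝒞)) (p : (𝒲 → 𝒞) → ℝ) (a b : ℝ) : Prop :=
  ∀ w : 𝒲, ∑ w' ∈ Finset.univ.erase w,
      ({x : 𝒲 | a / ((ImF ℱ).card : ℝ) < collP ℱ p w x}).indicator (collP ℱ p w) w' ≤ b

section Helpers

variable {𝒲 𝒞 𝒞₁ 𝒞₂ : Type*}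

lemma collP_nonneg {ℱ : Finset (𝒲 → 𝒞)} {p : (𝒲 → 𝒞) → ℝ} (h : IsDistOn ℱ p) (w w' : 𝒲) :
    0 ≤ collP ℱ p w w' :=
  Finset.sum_nonneg fun f _ => Set.indicator_nonneg (fun g _ => h.1 g) f

lemma collP_le_one {ℱ : Finset (𝒲 → 𝒞)} {p : (𝒲 → 𝒞) → ℝ} (h : IsDistOn ℱ p) (w w' : 𝒲) :
    collP ℱ p w w' ≤ 1 := by
  rw [← h.2.1]
  exact Finset.sum_le_sum fun f _ => Set.indicator_le_self' (fun g _ => h.1 g) f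

lemma IsDistOn.nonempty {ℱ : Finset (𝒲 → 𝒞)} {p : (𝒲 → 𝒞) → ℝ} (h : IsDistOn ℱ p) :
    ℱ.Nonempty := by
  rw [Finset.nonempty_iff_ne_empty]
  rintro rfl
  simpa using h.2.1

lemma card_ImF_pos [Fintype 𝒲] [DecidableEq 𝒞] {ℱ : Finset (𝒲 → 𝒞)} (h : ℱ.Nonempty) (w : 𝒲) :
    0 < ((ImF ℱ).card : ℝ) := by
  obtain ⟨f, hf⟩ := h
  exact_mod_cast Finset.card_pos.2 ⟨f w, Finset.mem_biUnion.2
    ⟨f, hf, Finset.mem_image_of_mem f (Finset.mem_univ w)⟩⟩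

lemma collP_joint [Fintype 𝒲] [DecidableEq 𝒞₁] [DecidableEq 𝒞₂]
    (ℱ : Finset (𝒲 → 𝒞₁)) (pF : (𝒲 → 𝒞₁) → ℝ) (𝒢 : Finset (𝒲 → 𝒞₂)) (pG : (𝒲 → 𝒞₂) → ℝ)
    (w w' : 𝒲) :
    collP ((ℱ ×ˢ 𝒢).image fun fg => fun w => (fg.1 w, fg.2 w))
      (fun h => pF (fun w => (h w).1) * pG (fun w => (h w).2)) w w' =
      collP ℱ pF w w' * collP 𝒢 pG w w' := by
  classical
  unfold collP
  rw [Finset.sum_image, Finset.sum_mul_sum, ← Finset.sum_product']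
  · refine Finset.sum_congr rfl fun fg _ => ?_
    by_cases h1 : fg.1 w = fg.1 w' <;> by_cases h2 : fg.2 w = fg.2 w' <;>
      simp [Set.indicator, h1, h2]
  · rintro ⟨f, g⟩ _ ⟨f', g'⟩ _ h
    have h' := fun x => Prod.ext_iff.1 (congrFun h x)
    exact Prod.ext (funext fun x => (h' x).1) (funext fun x => (h' x).2)

lemma card_ImF_joint_le [Fintype 𝒲] [DecidableEq 𝒲] [DecidableEq 𝒞₁] [DecidableEq 𝒞₂]
    (ℱ : Finset (𝒲 → 𝒞₁)) (𝒢 : Finset (𝒲 → 𝒞₂)) :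
    ((ImF ((ℱ ×ˢ 𝒢).image fun fg => fun w => (fg.1 w, fg.2 w))).card : ℝ) ≤
      ((ImF ℱ).card : ℝ) * ((ImF 𝒢).card : ℝ) := by
  rw [← Nat.cast_mul, ← Finset.card_product, Nat.cast_le]
  refine Finset.card_le_card fun c hc => ?_
  simp only [ImF, Finset.mem_biUnion, Finset.mem_image, Finset.mem_product, Finset.mem_univ,
    true_and] at hc ⊢
  obtain ⟨_, ⟨⟨f, g⟩, ⟨hf, hg⟩, rfl⟩, x, rfl⟩ := hc
  exact ⟨⟨f, hf, x, rfl⟩, ⟨g, hg, x, rfl⟩⟩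

/-- A product above the joint threshold has a factor above its own threshold. The signs of `a`
and `b` are not restricted. -/
lemma lt_or_lt_of_joint {x y a b m n k : ℝ} (hx : 0 ≤ x) (hy : 0 ≤ y) (hm : 0 < m) (hn : 0 < n)
    (hk : 0 < k) (hkmn : k ≤ m * n) (h : a * b / k < x * y) : a / m < x ∨ b / n < y := by
  by_contra! hc
  obtain ⟨h1, h2⟩ := hc
  have ha : 0 ≤ a := by
    have := hx.trans h1
    rwa [le_div_iff₀ hm, zero_mul] at this
  have hb : 0 ≤ b := by
    have := hy.trans h2
    rwa [le_div_iff₀ hn, zero_mul] at this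
  have h3 : x * y ≤ a / m * (b / n) := mul_le_mul h1 h2 hy (hx.trans h1)
  rw [div_mul_div_comm] at h3
  have h4 : a * b / (m * n) ≤ a * b / k :=
    div_le_div_of_nonneg_left (mul_nonneg ha hb) hk hkmn
  linarith

end Helpers

/-- If `(ℱ, pF)` satisfies the `(αF, βF)`-hash inequality and `(𝒢, pG)` satisfies the
`(αG, βG)`-hash inequality, then the joint ensemble, consisting of the paired functions
`w ↦ (f w, g w)` with the product distribution, satisfies the
`(αF * αG, βF + βG)`-hash inequality. -/
theorem hashIneq_joint {𝒲 𝒞₁ 𝒞₂ : Type*} [Fintype 𝒲] [DecidableEq 𝒲]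
    [DecidableEq 𝒞₁] [DecidableEq 𝒞₂]
    (ℱ : Finset (𝒲 → 𝒞₁)) (pF : (𝒲 → 𝒞₁) → ℝ)
    (𝒢 : Finset (𝒲 → 𝒞₂)) (pG : (𝒲 → 𝒞₂) → ℝ)
    (hF : IsDistOn ℱ pF) (hG : IsDistOn 𝒢 pG)
    (αF βF αG βG : ℝ)
    (hFhash : HashIneq ℱ pF αF βF) (hGhash : HashIneq 𝒢 pG αG βG) :
    HashIneq ((ℱ ×ˢ 𝒢).image fun fg => fun w => (fg.1 w, fg.2 w))
      (fun h => pF (fun w => (h w).1) * pG (fun w => (h w).2))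
      (αF * αG) (βF + βG) := by
  intro w
  have hne := (hF.nonempty.product hG.nonempty).image
    fun fg : (𝒲 → 𝒞₁) × (𝒲 → 𝒞₂) => fun w => (fg.1 w, fg.2 w)
  refine le_trans ?_ (add_le_add (hFhash w) (hGhash w))
  rw [← Finset.sum_add_distrib]
  refine Finset.sum_le_sum fun w' _ => ?_
  have hx := collP_nonneg hF w w'
  have hy := collP_nonneg hG w w'
  have hiF := Set.indicator_nonneg
    (s := {x : 𝒲 | αF / ((ImF ℱ).card : ℝ) < collP ℱ pF w x})
    (fun x _ => collP_nonneg hF w x) w'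
  have hiG := Set.indicator_nonneg
    (s := {x : 𝒲 | αG / ((ImF 𝒢).card : ℝ) < collP 𝒢 pG w x})
    (fun x _ => collP_nonneg hG w x) w'
  refine Set.indicator_apply_le' (fun hw => ?_) (fun _ => add_nonneg hiF hiG)
  rw [Set.mem_ofPred_eq, collP_joint] at hw
  rw [collP_joint]
  rcases lt_or_lt_of_joint hx hy (card_ImF_pos hF.nonempty w) (card_ImF_pos hG.nonempty w)
    (card_ImF_pos hne w) (card_ImF_joint_le ℱ 𝒢) hw with h | h
  · rw [Set.indicator_of_mem (s := {x : 𝒲 | αF / ((ImF ℱ).card : ℝ) < collP ℱ pF w x}) h]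
    exact (mul_le_of_le_one_right hx (collP_le_one hG w w')).trans (le_add_of_nonneg_right hiG)
  · rw [Set.indicator_of_mem (s := {x : 𝒲 | αG / ((ImF 𝒢).card : ℝ) < collP 𝒢 pG w x}) h]
    exact (mul_le_of_le_one_left hy (collP_le_one hF w w')).trans (le_add_of_nonneg_left hiF)
end

section
/- Let U and V be finite sets, let μ_{UV} be a joint probability distribution of a state U ∈ 𝒰 and an observation V ∈ 𝒱, and let the stochastic decision Û be drawn according to the posterior μ_{U|V}, i.e., the joint distribution of (U, V, Û) is μ(u, v, û) = μ_{UV}(u, v) μ_{U|V}(û | v). Then for every conditional probability distribution μ_{Ǔ|V} on 𝒰 given 𝒱, Σ_{u, v, û : û ≠ u} μ_{UV}(u, v) μ_{U|V}(û | v) ≤ 2 Σ_{u, v, ǔ : ǔ ≠ u} μ_{UV}(u, v) μ_{Ǔ|V}(ǔ | v); that is, the error probability of the posterior stochastic decision is at most twice the error probability of any (possibly stochastic) decision rule. -/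
/-- Comparison of the posterior decision with the constant decision `c`, for an unnormalised weight
`p`. If the total mass is zero, both sides vanish. -/
lemma posterior_error_le_const {𝒰 : Type*} [Fintype 𝒰] [DecidableEq 𝒰]
    (p : 𝒰 → ℝ) (hp : ∀ u, 0 ≤ p u) (c : 𝒰) :
    ∑ u, ∑ w ∈ Finset.univ.erase u, p u * (p w / ∑ u', p u') ≤ 2 * (∑ u, p u - p c) := by
  set S := ∑ u, p u with hS
  have hc : p c ≤ S := Finset.single_le_sum (fun u _ => hp u) (Finset.mem_univ c)
  have hsq : p c ^ 2 ≤ ∑ u, p u ^ 2 :=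
    Finset.single_le_sum (f := fun u => p u ^ 2) (fun u _ => sq_nonneg _) (Finset.mem_univ c)
  have hL : ∑ u, ∑ w ∈ Finset.univ.erase u, p u * (p w / S) = (S ^ 2 - ∑ u, p u ^ 2) / S := by
    have hterm : ∀ u, ∑ w ∈ Finset.univ.erase u, p u * (p w / S) = (p u * S - p u ^ 2) / S := by
      intro u
      rw [← Finset.mul_sum, ← Finset.sum_div, Finset.sum_erase_eq_sub (Finset.mem_univ u), ← hS]
      ring
    rw [Finset.sum_congr rfl fun u _ => hterm u, ← Finset.sum_div, Finset.sum_sub_distrib,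
      ← Finset.sum_mul, ← hS, sq S]
  rw [hL]
  rcases ((hp c).trans hc).eq_or_lt with h0 | hpos
  · rw [← h0] at hc ⊢
    simp [le_antisymm hc (hp c)]
  · rw [div_le_iff₀ hpos]
    nlinarith [sq_nonneg (S - p c)]

/-- Comparison of the posterior decision with a stochastic decision `q`, for an unnormalised weight
`p`. -/
lemma posterior_error_le {𝒰 : Type*} [Fintype 𝒰] [DecidableEq 𝒰]
    (p : 𝒰 → ℝ) (hp : ∀ u, 0 ≤ p u) (q : 𝒰 → ℝ) (hq : ∀ u, 0 ≤ q u) (hq1 : ∑ u, q u = 1) :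
    ∑ u, ∑ w ∈ Finset.univ.erase u, p u * (p w / ∑ u', p u') ≤
      2 * ∑ u, ∑ w ∈ Finset.univ.erase u, p u * q w := by
  have hR : ∑ u, ∑ w ∈ Finset.univ.erase u, p u * q w = ∑ u, p u - ∑ u, q u * p u := by
    rw [← Finset.sum_sub_distrib]
    refine Finset.sum_congr rfl fun u _ => ?_
    rw [← Finset.mul_sum, Finset.sum_erase_eq_sub (Finset.mem_univ u), hq1]
    ring
  rw [hR]
  calc ∑ u, ∑ w ∈ Finset.univ.erase u, p u * (p w / ∑ u', p u')
      = ∑ c, q c * ∑ u, ∑ w ∈ Finset.univ.erase u, p u * (p w / ∑ u', p u') := by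
        rw [← Finset.sum_mul, hq1, one_mul]
    _ ≤ ∑ c, q c * (2 * (∑ u, p u - p c)) :=
        Finset.sum_le_sum fun c _ =>
          mul_le_mul_of_nonneg_left (posterior_error_le_const p hp c) (hq c)
    _ = ∑ c, (q c * (2 * ∑ u, p u) - 2 * (q c * p c)) :=
        Finset.sum_congr rfl fun c _ => by ring
    _ = 2 * (∑ u, p u - ∑ u, q u * p u) := by
        rw [Finset.sum_sub_distrib, ← Finset.sum_mul, ← Finset.mul_sum, hq1]
        ring

/-- The error probability of the stochastic decision drawn from the posterior
`μ_{U|V}` is at most twice the error probability of any (possibly stochastic)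
decision rule `ν`. -/
theorem posterior_stochastic_decision {𝒰 𝒱 : Type*} [Fintype 𝒰] [DecidableEq 𝒰]
    [Fintype 𝒱]
    (μ : 𝒰 × 𝒱 → ℝ) (hμ : IsPMF μ)
    (ν : 𝒱 → 𝒰 → ℝ) (hν : ∀ v, (∀ u, 0 ≤ ν v u) ∧ ∑ u, ν v u = 1) :
    ∑ u : 𝒰, ∑ v : 𝒱, ∑ uh ∈ Finset.univ.erase u,
        μ (u, v) * (μ (uh, v) / ∑ u' : 𝒰, μ (u', v)) ≤
      2 * ∑ u : 𝒰, ∑ v : 𝒱, ∑ uc ∈ Finset.univ.erase u, μ (u, v) * ν v uc := by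
  rw [Finset.sum_comm, Finset.sum_comm (s := (Finset.univ : Finset 𝒰))
    (f := fun u v => ∑ uc ∈ Finset.univ.erase u, μ (u, v) * ν v uc), Finset.mul_sum]
  exact Finset.sum_le_sum fun v _ =>
    posterior_error_le (fun u => μ (u, v)) (fun u => hμ.1 (u, v)) (ν v) (hν v).1 (hν v).2
end
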